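/- There exists a real constant c > 0 such that for all natural numbers ι and k with ι ≥ 2 and ι·log₂(ι) ≤ k, there exists a natural number m with m·ι ≤ c·k/log₂(ι) and an injective function from (Fin k → Bool) into Fin m → Equiv.Perm (Fin ι). (Combinatorial core of the ι-tight reduction 𝓡': all 2^k assignments over a bag of k variables can be encoded injectively by m blocks of orderings of ι elements each, using only O(k/log ι) ordering vertices in total.) -/

import Mathlib

/-!
Pairing the factors `i + 1` and `ι - i` of `ι! ^ 2`, each pair having product at least `ι`, gives
`ι ^ ι ≤ ι! ^ 2`, so one block of `ι` elements carries `log₂ ι! ≥ (ι * log₂ ι) / 2` bits.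
Hence `m = ⌈2 * k / (ι * log₂ ι)⌉` blocks suffice to tell `2 ^ k` assignments apart. The assumption
`ι * log₂ ι ≤ k` absorbs the rounding, so that `m * ι * log₂ ι ≤ 2 * k + ι * log₂ ι ≤ 3 * k`.
-/

open scoped Nat

theorem pow_self_le_factorial_sq (n : ℕ) : n ^ n ≤ n ! ^ 2 := by
  have le_pair : ∀ i ∈ Finset.range n, n ≤ (i + 1) * (n - i) := by
    intro i hi
    obtain ⟨d, rfl⟩ := Nat.exists_eq_add_of_lt (Finset.mem_range.mp hi)
    rw [show i + d + 1 - i = d + 1 by lia]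
    nlinarith [Nat.zero_le (i * d)]
  calc n ^ n = ∏ _i ∈ Finset.range n, n := by simp
    _ ≤ ∏ i ∈ Finset.range n, (i + 1) * (n - i) := Finset.prod_le_prod' le_pair
    _ = n ! * n ! := by
      rw [Finset.prod_mul_distrib, Finset.prod_range_add_one_eq_factorial,
        ← Nat.descFactorial_eq_prod_range, Nat.descFactorial_self]
    _ = n ! ^ 2 := (sq _).symm

theorem mul_logb_self_le_two_mul_logb_factorial {b : ℝ} (hb : 1 < b) (n : ℕ) :
    n * Real.logb b n ≤ 2 * Real.logb b n ! := by
  have hpow : (n : ℝ) ^ n ≤ (n ! : ℝ) ^ 2 := mod_cast pow_self_le_factorial_sq n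
  have hpos : (0 : ℝ) < (n : ℝ) ^ n := mod_cast Nat.pow_self_pos
  simpa only [Real.logb_pow, Nat.cast_ofNat] using Real.logb_le_logb_of_le hb hpos hpow

theorem pow_le_factorial_pow_of_two_mul_le_mul_logb {b : ℝ} (hb : 1 < b) {k m n : ℕ}
    (h : 2 * (k : ℝ) ≤ m * (n * Real.logb b n)) : b ^ k ≤ (n ! : ℝ) ^ m := by
  have hk : (k : ℝ) ≤ Real.logb b ((n ! : ℝ) ^ m) := by
    rw [Real.logb_pow]
    have := mul_le_mul_of_nonneg_left (mul_logb_self_le_two_mul_logb_factorial hb n)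
      (Nat.cast_nonneg (α := ℝ) m)
    linarith
  rwa [Real.le_logb_iff_rpow_le hb (by positivity), Real.rpow_natCast] at hk

theorem exists_nsmul_mem_Ico {M : Type*} [AddCommMonoid M] [LinearOrder M]
    [IsOrderedCancelAddMonoid M] [Archimedean M] {a x : M} (ha : 0 < a) (hx : 0 ≤ x) :
    ∃ m : ℕ, m • a ∈ Set.Ico x (x + a) := by
  classical
  have hex : ∃ m : ℕ, x ≤ m • a := Archimedean.arch x ha
  refine ⟨Nat.find hex, Nat.find_spec hex, ?_⟩
  rcases hfind : Nat.find hex with _ | m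
  · simpa only [zero_nsmul] using add_pos_of_nonneg_of_pos hx ha
  · have hlt : m • a < x := not_le.mp (Nat.find_min hex (by lia))
    simpa only [succ_nsmul] using add_lt_add_left hlt a

/-- Combinatorial core of the ι-tight reduction 𝓡': there is `c > 0` such that
for all `ι ≥ 2` and `k` with `ι·log₂ ι ≤ k`, there is `m` with `m·ι ≤ c·k/log₂ ι`
and an injection of the assignments `Fin k → Bool` into the block orderings
`Fin m → Equiv.Perm (Fin ι)`. -/
theorem exists_blocks_with_injection :
    ∃ c : ℝ, 0 < c ∧ ∀ ι k : ℕ, 2 ≤ ι → (ι : ℝ) * Real.logb 2 (ι : ℝ) ≤ (k : ℝ) →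
      ∃ m : ℕ, ((m : ℝ) * (ι : ℝ)) ≤ c * (k : ℝ) / Real.logb 2 (ι : ℝ) ∧
        ∃ f : (Fin k → Bool) → (Fin m → Equiv.Perm (Fin ι)), Function.Injective f := by
  refine ⟨3, by norm_num, fun ι k hι hk => ?_⟩
  have hlog : 0 < Real.logb 2 (ι : ℝ) := Real.logb_pos (by norm_num) (mod_cast hι)
  have hblock : 0 < (ι : ℝ) * Real.logb 2 ι := mul_pos (by positivity) hlog
  obtain ⟨m, hm_ge, hm_lt⟩ := exists_nsmul_mem_Ico hblock (x := 2 * (k : ℝ)) (by positivity)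
  rw [nsmul_eq_mul] at hm_ge hm_lt
  refine ⟨m, ?_, ?_⟩
  · rw [le_div_iff₀ hlog]
    linarith
  · have hpow : 2 ^ k ≤ ι ! ^ m :=
      mod_cast pow_le_factorial_pow_of_two_mul_le_mul_logb one_lt_two hm_ge
    have hcard : Fintype.card (Fin k → Bool) ≤ Fintype.card (Fin m → Equiv.Perm (Fin ι)) := by
      simpa [Fintype.card_perm] using hpow
    obtain ⟨f⟩ := Function.Embedding.nonempty_of_card_le hcard
    exact ⟨f, f.injective⟩
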